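/- Let K be a number field with ring of integers O_K, let f ∈ O_K[x] be monic and separable of degree D ≥ 1 whose Galois group over K has order M, and let ℓ ≥ 2. Then there exist infinitely many monic polynomials g ∈ O_K[x] of degree ℓ such that the Galois group of f∘g over K has order M·(ℓ!)^D. -/

import Mathlib

open Polynomial NumberField

/-!
Over the splitting field `L` of `f`, with roots `α`, the composition `f ∘ g` is the product of the
polynomials `g - α`, so it suffices to find `g` such that the Galois group of this product over `L`
is the full product of symmetric groups. This follows from conditions on reductions modulo primes
of `L`: for each `α`, an irreducible reduction of `g - α` gives transitivity, a reduction of type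
(linear) × (irreducible) gives double transitivity, and a prime at which `g - α` has a single double
root, vanishing there to first order, while the other `g - β` stay separable, gives an inertia
element acting as one transposition of the roots of `g - α` and fixing all other roots.

At primes of degree one of `L`, each condition is implied by a congruence on a `g` with coefficients
in `ℤ`. As there are such primes above infinitely many rational primes, the congruences can be taken
to have coprime moduli, and the Chinese remainder theorem imposes all of them at once.
-/

section GroupTheory

open Equiv MulAction

theorem eq_top_of_isSwap_mem_of_forall_conj_mem {G X : Type*} [Group G] [MulAction G X] [Finite X]
    [DecidableEq X] [IsMultiplyPretransitive G X 2] (K : Subgroup (Perm X))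
    (hconj : ∀ g : G, ∀ τ ∈ K, toPerm g * τ * (toPerm g)⁻¹ ∈ K) {s : Perm X} (hs : s.IsSwap)
    (hsK : s ∈ K) : K = ⊤ := by
  obtain ⟨a, b, hab, rfl⟩ := hs
  rw [eq_top_iff, ← Perm.closure_isSwap, Subgroup.closure_le]
  rintro _ ⟨c, d, hcd, rfl⟩
  obtain ⟨g, rfl, rfl⟩ := is_two_pretransitive_iff.mp ‹IsMultiplyPretransitive G X 2› hab hcd
  simpa only [← swap_apply_apply, toPerm_apply, SetLike.mem_coe] using hconj g _ hsK

theorem card_eq_prod_factorial_of_isSwap {G ι : Type*} {X : ι → Type*} [Group G] [Fintype ι]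
    [∀ i, Finite (X i)] [∀ i, DecidableEq (X i)] [∀ i, MulAction G (X i)]
    [∀ i, IsMultiplyPretransitive G (X i) 2]
    (hfaithful : ∀ g : G, (∀ i (x : X i), g • x = x) → g = 1)
    (hswap : ∀ i, ∃ g : G, (toPermHom G (X i) g).IsSwap ∧ ∀ j ≠ i, ∀ x : X j, g • x = x) :
    Nat.card G = ∏ i, (Nat.card (X i)).factorial := by
  classical
  set φ : G →* ∀ i, Perm (X i) := MonoidHom.pi fun i ↦ toPermHom G (X i) with hφ
  have hinj : Function.Injective φ := by
    rw [injective_iff_map_eq_one]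
    exact fun g hg ↦ hfaithful g fun i x ↦ DFunLike.congr_fun (congr_fun hg i) x
  have comap_mulSingle_range (i : ι) : φ.range.comap (MonoidHom.mulSingle _ i) = ⊤ := by
    obtain ⟨s, hs, hs_fix⟩ := hswap i
    refine eq_top_of_isSwap_mem_of_forall_conj_mem _ (G := G) ?_ hs ⟨s, ?_⟩
    · rintro g τ ⟨k, hk⟩
      refine ⟨g * k * g⁻¹, ?_⟩
      rw [map_mul, map_mul, hk, map_inv]
      ext j x
      obtain rfl | hji := eq_or_ne j i <;> simp [*]
    · ext j x
      obtain rfl | hji := eq_or_ne j i <;> simp [*]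
  have hsurj : Function.Surjective φ := by
    rw [← MonoidHom.range_eq_top, eq_top_iff, ← Subgroup.pi_top Set.univ, Subgroup.pi_le_iff]
    exact fun i ↦ Subgroup.map_le_iff_le_comap.mpr (comap_mulSingle_range i).ge
  rw [Nat.card_congr (Equiv.ofBijective φ ⟨hinj, hsurj⟩), Nat.card_pi]
  exact Finset.prod_congr rfl fun i _ ↦ Nat.card_perm

end GroupTheory

section Reduction

open Ideal.Quotient

theorem map_mk_map_algebraMap {A B : Type*} [CommRing A] [CommRing B] [Algebra A B] (Q : Ideal A)
    (P : Ideal B) [P.LiesOver Q] (p : A[X]) :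
    (p.map (algebraMap A B)).map (mk P) = (p.map (mk Q)).map (algebraMap (A ⧸ Q) (B ⧸ P)) := by
  rw [Polynomial.map_map, Polynomial.map_map]
  rfl

variable {A B : Type*} [CommRing A] [CommRing B] [IsDomain B] [Algebra A B]

theorem map_mk_aroots {p : A[X]} (hp : p.Monic) (hsplit : (p.map (algebraMap A B)).Splits)
    (Q : Ideal A) (P : Ideal B) [P.LiesOver Q] [P.IsPrime] :
    (p.aroots B).map (mk P) = (p.map (mk Q)).aroots (B ⧸ P) := by
  rw [aroots, aroots, ← map_mk_map_algebraMap Q P,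
    hsplit.roots_map_of_ne_zero ((hp.map _).map _).ne_zero]

theorem nodup_map_mk_aroots {p : A[X]} (hp : p.Monic) (hsplit : (p.map (algebraMap A B)).Splits)
    (Q : Ideal A) (P : Ideal B) [P.LiesOver Q] [P.IsPrime] (hsep : (p.map (mk Q)).Separable) :
    ((p.aroots B).map (mk P)).Nodup := by
  rw [map_mk_aroots hp hsplit Q P]
  exact nodup_roots hsep.map

variable {G : Type*} [Group G] [MulSemiringAction G B] [SMulCommClass G A B]

variable (B G) in
/-- The roots in `B` of a polynomial over `A`, as a set with an action of a group `G` of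
automorphisms of `B` over `A`. -/
def rootSubMulAction (p : A[X]) : SubMulAction G B where
  carrier := p.rootSet B
  smul_mem' := fun σ _ hx ↦ smul_mem_rootSet σ hx

instance (p : A[X]) : Finite (rootSubMulAction B G p) :=
  p.rootSet_finite B

variable {p : A[X]}

theorem mem_aroots_rootSubMulAction (x : rootSubMulAction B G p) : (x : B) ∈ p.aroots B :=
  mem_aroots'.mpr (mem_rootSet'.mp x.2)

theorem card_rootSubMulAction (hp : p.Monic) (hsplit : (p.map (algebraMap A B)).Splits)
    (hnodup : (p.aroots B).Nodup) : Nat.card (rootSubMulAction B G p) = p.natDegree := by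
  classical
  calc Nat.card (p.rootSet B) = (p.aroots B).toFinset.card := by
        rw [rootSet_def, Nat.card_coe_set_eq, Set.ncard_coe_finset]
    _ = p.natDegree := by
        rw [Multiset.toFinset_card_of_nodup hnodup, ← hp.natDegree_map (algebraMap A B),
          hsplit.natDegree_eq_card_roots]

variable (hp : p.Monic) (hsplit : (p.map (algebraMap A B)).Splits)
  (Q : Ideal A) (P : Ideal B) [P.LiesOver Q] [P.IsPrime]

include hp hsplit

theorem exists_mk_rootSubMulAction_eq {z : B ⧸ P} (hz : z ∈ (p.map (mk Q)).aroots (B ⧸ P)) :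
    ∃ x : rootSubMulAction B G p, mk P (x : B) = z := by
  rw [← map_mk_aroots hp hsplit Q P, Multiset.mem_map] at hz
  obtain ⟨x, hx, rfl⟩ := hz
  exact ⟨⟨x, mem_rootSet'.mpr (mem_aroots'.mp hx)⟩, rfl⟩

theorem mk_rootSubMulAction_mem_aroots (x : rootSubMulAction B G p) :
    mk P (x : B) ∈ (p.map (mk Q)).aroots (B ⧸ P) := by
  rw [← map_mk_aroots hp hsplit Q P]
  exact Multiset.mem_map_of_mem _ (mem_aroots_rootSubMulAction x)

theorem mk_rootSubMulAction_injective (hsep : (p.map (mk Q)).Separable) :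
    Function.Injective fun x : rootSubMulAction B G p ↦ mk P (x : B) :=
  fun x y hxy ↦ Subtype.ext <| Multiset.inj_on_of_nodup_map
    (nodup_map_mk_aroots hp hsplit Q P hsep) x (mem_aroots_rootSubMulAction x) y
    (mem_aroots_rootSubMulAction y) hxy

end Reduction

section Transitivity

open Ideal.Quotient MulAction
open scoped Pointwise

theorem mk_smul_eq_mk_of_mk_eq_algebraMap {A B G : Type*} [CommRing A] [CommRing B] [Algebra A B]
    [Group G] [MulSemiringAction G B] [SMulCommClass G A B] {Q : Ideal A} {P : Ideal B}
    [P.LiesOver Q] (σ : stabilizer G P) {x : B} {a : A ⧸ Q}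
    (hx : mk P x = algebraMap (A ⧸ Q) (B ⧸ P) a) : mk P (σ • x) = mk P x := by
  rw [← stabilizerHom_apply P Q, hx, AlgEquiv.commutes]

variable {A B G : Type*} [CommRing A] [CommRing B] [Algebra A B]
  [Group G] [Finite G] [MulSemiringAction G B] [SMulCommClass G A B] [Algebra.IsInvariant A B G]

theorem exists_mk_smul_eq_mk_of_irreducible {Q : Ideal A} [Q.IsMaximal] {P : Ideal B} [P.IsMaximal]
    [P.LiesOver Q] {h : (A ⧸ Q)[X]} (hh : Irreducible h) {x y : B}
    (hx : aeval (mk P x) h = 0) (hy : aeval (mk P y) h = 0) :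
    ∃ σ : stabilizer G P, mk P (σ • x) = mk P y := by
  let _ := Ideal.Quotient.field Q
  let _ := Ideal.Quotient.field P
  have hnormal : Normal (A ⧸ Q) (B ⧸ P) := Ideal.Quotient.normal G Q P
  have hconj : aeval (mk P y) (minpoly (A ⧸ Q) (mk P x)) = 0 := by
    rw [← minpoly.eq_of_irreducible hh hx, map_mul, hy, zero_mul]
  obtain ⟨τ, hτ⟩ := minpoly.exists_algEquiv_of_root' (hnormal.isAlgebraic _) hconj
  obtain ⟨σ, rfl⟩ := stabilizerHom_surjective G Q P τ
  exact ⟨σ, hτ⟩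

/-- Reducing `p` modulo some maximal ideal gives a separable irreducible polynomial. This makes the
Galois group of `p` transitive on roots. -/
def HasIrreducibleReduction (p : A[X]) : Prop :=
  ∃ Q : Ideal A, Q.IsMaximal ∧ Irreducible (p.map (mk Q)) ∧ (p.map (mk Q)).Separable

/-- Reducing `p` modulo some maximal ideal gives a separable polynomial which is the product of a
linear and an irreducible factor. This makes the stabilizer of a root in the Galois group
of `p` transitive on the other roots. -/
def HasLinearMulIrreducibleReduction (p : A[X]) : Prop :=
  ∃ Q : Ideal A, Q.IsMaximal ∧ (p.map (mk Q)).Separable ∧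
    ∃ (t : A ⧸ Q) (h : (A ⧸ Q)[X]), Irreducible h ∧ p.map (mk Q) = (X - C t) * h

variable [IsDomain B] [FaithfulSMul A B] {p : A[X]} (hp : p.Monic)
  (hsplit : (p.map (algebraMap A B)).Splits)

include hp hsplit

theorem isPretransitive_of_hasIrreducibleReduction (h : HasIrreducibleReduction p) :
    IsPretransitive G (rootSubMulAction B G p) := by
  obtain ⟨Q, hQ, hirr, hsep⟩ := h
  have := Algebra.IsInvariant.isIntegral A B G
  obtain ⟨P, hP, hPQ⟩ := Ideal.exists_maximal_ideal_liesOver_of_isIntegral (S := B) Q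
  refine ⟨fun x y ↦ ?_⟩
  have hroot (z : rootSubMulAction B G p) : aeval (mk P (z : B)) (p.map (mk Q)) = 0 :=
    (mem_aroots'.mp (mk_rootSubMulAction_mem_aroots hp hsplit Q P z)).2
  obtain ⟨σ, hσ⟩ := exists_mk_smul_eq_mk_of_irreducible (G := G) hirr (hroot x) (hroot y)
  exact ⟨σ, mk_rootSubMulAction_injective hp hsplit Q P hsep hσ⟩

theorem isMultiplyPretransitive_two_of_hasLinearMulIrreducibleReduction
    [IsPretransitive G (rootSubMulAction B G p)] (h : HasLinearMulIrreducibleReduction p) :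
    IsMultiplyPretransitive G (rootSubMulAction B G p) 2 := by
  obtain ⟨Q, hQ, hsep, t, h, hirr, hpt⟩ := h
  have := Algebra.IsInvariant.isIntegral A B G
  obtain ⟨P, hP, hPQ⟩ := Ideal.exists_maximal_ideal_liesOver_of_isIntegral (S := B) Q
  have hinj := mk_rootSubMulAction_injective (G := G) hp hsplit Q P hsep
  obtain ⟨r, hr⟩ := exists_mk_rootSubMulAction_eq (G := G) hp hsplit Q P
    (z := algebraMap (A ⧸ Q) (B ⧸ P) t)
    (mem_aroots'.mpr ⟨((hp.map _).map _).ne_zero, by simp [hpt, aeval_algebraMap_apply]⟩)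
  have hroot (x : rootSubMulAction B G p) (hx : x ≠ r) : aeval (mk P (x : B)) h = 0 := by
    have hmul := (mem_aroots'.mp (mk_rootSubMulAction_mem_aroots hp hsplit Q P x)).2
    rw [hpt, map_mul, mul_eq_zero] at hmul
    refine hmul.resolve_left fun hxt ↦ hx (hinj ?_)
    simpa [sub_eq_zero, ← hr] using hxt
  rw [SubMulAction.ofStabilizer.isMultiplyPretransitive (n := 1) (a := r),
    is_one_pretransitive_iff]
  refine ⟨fun x y ↦ ?_⟩
  obtain ⟨σ, hσ⟩ := exists_mk_smul_eq_mk_of_irreducible (G := G) hirr (hroot x x.2) (hroot y y.2)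
  have hσr : (σ : G) • r = r := hinj (mk_smul_eq_mk_of_mk_eq_algebraMap σ hr)
  exact ⟨⟨σ, hσr⟩, Subtype.ext (hinj hσ)⟩

end Transitivity

section Inertia

open Ideal.Quotient MulAction

theorem exists_mem_inertia_ne_one {A B : Type*} (G : Type*) [CommRing A] [IsDedekindDomain A]
    [CommRing B] [IsDedekindDomain B] [Algebra A B] [Module.Finite A B] [Module.IsTorsionFree A B]
    [Group G] [Finite G] [MulSemiringAction G B] [IsGaloisGroup G A B]
    {Q : Ideal A} [Q.IsPrime] [PerfectField Q.ResidueField] (hQ : Q ≠ ⊥)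
    (P : Ideal B) [P.IsPrime] [P.LiesOver Q] {a : A} (haQ : a ∈ Q) (haQ2 : a ∉ Q ^ 2)
    (haP : algebraMap A B a ∈ P ^ 2) : ∃ σ ∈ P.inertia G, σ ≠ 1 := by
  have hQP : Q.map (algebraMap A B) ≤ P :=
    Ideal.map_le_iff_le_comap.mpr (Ideal.over_def P Q).le
  -- As `a` generates `Q` modulo `Q ^ 2`, the extension `Q B` lies in `P ^ 2`, so `P` is ramified.
  have hQ_le : Q ≤ Ideal.span {a} ⊔ Q ^ 2 := by
    intro c hc
    obtain ⟨d, e, he, rfl⟩ := Ideal.exists_mul_add_mem_pow_succ hQ (i := 1) a c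
      (by simpa using haQ) (by simpa using haQ2) (by simpa using hc)
    exact add_mem (Ideal.mem_sup_left (Ideal.mul_mem_right _ _ (Ideal.mem_span_singleton_self a)))
      (Ideal.mem_sup_right he)
  have hQP2 : Q.map (algebraMap A B) ≤ P ^ 2 := by
    refine (Ideal.map_mono hQ_le).trans ?_
    rw [Ideal.map_sup, Ideal.map_pow, Ideal.map_span, Set.image_singleton]
    exact sup_le ((Ideal.span_singleton_le_iff_mem _).mpr haP) (Ideal.pow_right_mono hQP 2)
  have hcard : Nat.card (P.inertia G) ≠ 1 := by
    rw [Ideal.card_inertia_eq_ramificationIdxIn Q P,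
      Ideal.ramificationIdxIn_eq_ramificationIdx Q P G,
      ← Ideal.ramificationIdx'_eq_ramificationIdx Q P hQ]
    exact (Ideal.ramificationIdx'_ne_one_iff hQP).mpr hQP2
  by_contra! htrivial
  exact hcard (Subgroup.card_eq_one.mpr ((Subgroup.eq_bot_iff_forall _).mpr htrivial))

theorem eval_mem_sq_of_map_mk_eq {R : Type*} [CommRing R] {I : Ideal R} {p : R[X]} {x t : R}
    (hx : p.IsRoot x) (hxt : mk I x = mk I t) {v : (R ⧸ I)[X]}
    (hv : p.map (mk I) = (X - C (mk I t)) * v) (hvt : v.IsRoot (mk I t)) : p.eval t ∈ I ^ 2 := by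
  obtain ⟨q, rfl⟩ := dvd_iff_isRoot.mpr hx
  have hqv : q.map (mk I) = v := by
    refine (monic_X_sub_C (mk I t)).isRegular.left ?_
    simpa only [Polynomial.map_mul, Polynomial.map_sub, map_X, map_C, hxt] using hv
  rw [eval_mul, pow_two]
  refine Ideal.mul_mem_mul ?_ ?_
  · simpa [← Ideal.Quotient.eq_zero_iff_mem, sub_eq_zero] using hxt.symm
  · rwa [← hqv, IsRoot, eval_map, eval₂_at_apply, Ideal.Quotient.eq_zero_iff_mem] at hvt

theorem card_le_count_aroots_map_mk {A B G : Type*} [CommRing A] [CommRing B] [IsDomain B]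
    [Algebra A B] [Group G] [MulSemiringAction G B] [SMulCommClass G A B] {p : A[X]}
    (hp : p.Monic) (hsplit : (p.map (algebraMap A B)).Splits)
    (Q : Ideal A) (P : Ideal B) [P.LiesOver Q] [P.IsPrime] [DecidableEq (B ⧸ P)]
    {z : B ⧸ P} {s : Finset (rootSubMulAction B G p)} (hs : ∀ x ∈ s, mk P (x : B) = z) :
    s.card ≤ ((p.map (mk Q)).aroots (B ⧸ P)).count z := by
  rw [← map_mk_aroots hp hsplit Q P, Multiset.count_map,
    ← Finset.card_map (Function.Embedding.subtype _)]
  refine Multiset.card_le_card ((Multiset.le_iff_subset (Finset.nodup _)).mpr fun x hx ↦ ?_)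
  obtain ⟨y, hy, rfl⟩ := Finset.mem_map.mp hx
  exact Multiset.mem_filter.mpr ⟨mem_aroots_rootSubMulAction y, (hs y hy).symm⟩

/-- Modulo some nonzero maximal ideal `Q`, the polynomial `p i` has exactly one multiple root `t`,
which is a double root, with `(p i).eval t` vanishing only to first order at `Q`, while the other
members of the family are separable. This makes inertia above `Q` act as a transposition of
roots of `p i`. The double root is encoded as a common root of `X - t` and a separable cofactor. -/
def HasSimpleDoubleRootReduction {A ι : Type*} [CommRing A] (p : ι → A[X]) (i : ι) : Prop :=
  ∃ Q : Ideal A, Q.IsMaximal ∧ Q ≠ ⊥ ∧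
    (∃ (t : A) (v : (A ⧸ Q)[X]), (p i).map (mk Q) = (X - C (mk Q t)) * v ∧ v.Separable ∧
      v.IsRoot (mk Q t) ∧ (p i).eval t ∉ Q ^ 2) ∧
    ∀ j ≠ i, ((p j).map (mk Q)).Separable

theorem isSwap_toPermHom_of_mem_inertia {A B G : Type*} [CommRing A] [CommRing B] [IsDomain B]
    [Algebra A B] [Group G] [MulSemiringAction G B] [SMulCommClass G A B] {p : A[X]}
    [DecidableEq (rootSubMulAction B G p)]
    (hp : p.Monic) (hsplit : (p.map (algebraMap A B)).Splits)
    {Q : Ideal A} {P : Ideal B} [P.LiesOver Q] [P.IsPrime]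
    {t : A ⧸ Q} {v : (A ⧸ Q)[X]} (hv : p.map (mk Q) = (X - C t) * v) (hsep : v.Separable)
    {σ : G} (hσ : σ ∈ P.inertia G) (hσp : toPermHom G (rootSubMulAction B G p) σ ≠ 1) :
    (toPermHom G (rootSubMulAction B G p) σ).IsSwap := by
  classical
  have := Fintype.ofFinite (rootSubMulAction B G p)
  set t' := algebraMap (A ⧸ Q) (B ⧸ P) t
  have hfactor : (p.map (mk Q)).map (algebraMap (A ⧸ Q) (B ⧸ P)) =
      (X - C t') * v.map (algebraMap (A ⧸ Q) (B ⧸ P)) := by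
    rw [hv, Polynomial.map_mul, Polynomial.map_sub, map_X, map_C]
  have count_le (z : B ⧸ P) :
      ((p.map (mk Q)).aroots (B ⧸ P)).count z ≤ (if z = t' then 1 else 0) + 1 := by
    rw [aroots, hfactor, roots_mul (hfactor ▸ ((hp.map _).map _).ne_zero), roots_X_sub_C,
      Multiset.count_add, Multiset.count_singleton]
    gcongr
    exact Multiset.nodup_iff_count_le_one.mp (nodup_roots hsep.map) z
  have mk_eq_of_moved (x : rootSubMulAction B G p) (hx : σ • x ≠ x) : mk P (x : B) = t' := by
    have hpair := card_le_count_aroots_map_mk hp hsplit Q P (s := {σ • x, x}) (z := mk P (x : B))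
      (by simpa using Ideal.Quotient.eq.mpr (hσ x))
    rw [Finset.card_pair hx] at hpair
    by_contra hxt
    simpa [hxt] using hpair.trans (count_le _)
  rw [← Equiv.Perm.card_support_eq_two]
  refine le_antisymm ?_ (Equiv.Perm.one_lt_card_support_of_ne_one hσp)
  refine (card_le_count_aroots_map_mk hp hsplit Q P (z := t') fun x hx ↦
    mk_eq_of_moved x (by simpa using hx)).trans ((count_le t').trans ?_)
  simp

end Inertia

section GaloisGroup

open Ideal.Quotient MulAction

variable {A B G ι : Type*} [CommRing A] [IsDedekindDomain A] [Ring.HasFiniteQuotients A]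
  [CommRing B] [IsDedekindDomain B] [Algebra A B] [Module.Finite A B] [Module.IsTorsionFree A B]
  [Group G] [Finite G] [MulSemiringAction G B] [IsGaloisGroup G A B] {p : ι → A[X]}
  (hp : ∀ i, (p i).Monic) (hsplit : ∀ i, ((p i).map (algebraMap A B)).Splits)
  (hfaithful : ∀ σ : G, (∀ i, ∀ x : rootSubMulAction B G (p i), σ • x = x) → σ = 1)

include hp hsplit hfaithful

theorem exists_isSwap_of_hasSimpleDoubleRootReduction {i : ι}
    [DecidableEq (rootSubMulAction B G (p i))] (h : HasSimpleDoubleRootReduction p i) :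
    ∃ σ : G, (toPermHom G (rootSubMulAction B G (p i)) σ).IsSwap ∧
      ∀ j ≠ i, ∀ x : rootSubMulAction B G (p j), σ • x = x := by
  obtain ⟨Q, hQ, hQ_ne, ⟨t, v, hv, hv_sep, hvt, htQ_sq⟩, hsep⟩ := h
  have : Finite (A ⧸ Q) := Ring.HasFiniteQuotients.finiteQuotient hQ_ne
  obtain ⟨P, hP, hPQ⟩ := Ideal.exists_maximal_ideal_liesOver_of_isIntegral (S := B) Q
  obtain ⟨x, hx⟩ := exists_mk_rootSubMulAction_eq (G := G) (hp i) (hsplit i) Q P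
    (z := algebraMap (A ⧸ Q) (B ⧸ P) (mk Q t)) <| mem_aroots'.mpr
      ⟨(((hp i).map _).map _).ne_zero, by simp [hv]⟩
  have htQ : (p i).eval t ∈ Q := by
    rw [← Ideal.Quotient.eq_zero_iff_mem, ← eval₂_at_apply, ← eval_map, hv]
    simp
  have htP : algebraMap A B ((p i).eval t) ∈ P ^ 2 := by
    have hroot : ((p i).map (algebraMap A B)).IsRoot (x : B) :=
      (mem_roots'.mp (mem_aroots_rootSubMulAction x)).2
    have hv_map : ((p i).map (algebraMap A B)).map (mk P) =
        (X - C (mk P (algebraMap A B t))) * v.map (algebraMap (A ⧸ Q) (B ⧸ P)) := by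
      rw [map_mk_map_algebraMap Q P, hv, Polynomial.map_mul, Polynomial.map_sub, map_X, map_C]
      rfl
    rw [← eval₂_at_apply, ← eval_map]
    exact eval_mem_sq_of_map_mk_eq hroot hx hv_map hvt.map
  obtain ⟨σ, hσ, hσ_ne⟩ := exists_mem_inertia_ne_one G hQ_ne P htQ htQ_sq htP
  have hσ_fix (j : ι) (hj : j ≠ i) (x : rootSubMulAction B G (p j)) : σ • x = x :=
    mk_rootSubMulAction_injective (hp j) (hsplit j) Q P (hsep j hj)
      (Ideal.Quotient.eq.mpr (hσ x))
  refine ⟨σ, isSwap_toPermHom_of_mem_inertia (hp i) (hsplit i) hv hv_sep hσ fun hσ_one ↦ ?_, hσ_fix⟩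
  refine hσ_ne (hfaithful σ fun j y ↦ ?_)
  obtain rfl | hj := eq_or_ne j i
  · exact DFunLike.congr_fun hσ_one y
  · exact hσ_fix j hj y

theorem card_eq_prod_natDegree_factorial [Fintype ι]
    (hirr : ∀ i, HasIrreducibleReduction (p i))
    (hlin : ∀ i, HasLinearMulIrreducibleReduction (p i))
    (hdouble : ∀ i, HasSimpleDoubleRootReduction p i) :
    Nat.card G = ∏ i, (p i).natDegree.factorial := by
  classical
  have htrans (i : ι) : IsMultiplyPretransitive G (rootSubMulAction B G (p i)) 2 :=
    have := isPretransitive_of_hasIrreducibleReduction (G := G) (hp i) (hsplit i) (hirr i)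
    isMultiplyPretransitive_two_of_hasLinearMulIrreducibleReduction (hp i) (hsplit i) (hlin i)
  rw [card_eq_prod_factorial_of_isSwap (X := fun i ↦ rootSubMulAction B G (p i)) hfaithful fun i ↦
    exists_isSwap_of_hasSimpleDoubleRootReduction hp hsplit hfaithful (hdouble i)]
  refine Finset.prod_congr rfl fun i _ ↦ ?_
  obtain ⟨Q, hQ, -, hsep⟩ := hirr i
  obtain ⟨P, hP, hPQ⟩ := Ideal.exists_maximal_ideal_liesOver_of_isIntegral (S := B) Q
  rw [card_rootSubMulAction (hp i) (hsplit i)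
    (nodup_map_mk_aroots (hp i) (hsplit i) Q P hsep).of_map]

end GaloisGroup

section NumberField

theorem splits_map_of_isIntegrallyClosed {A B N : Type*} [CommRing A] [CommRing B]
    [IsIntegrallyClosed B] [Field N] [Algebra B N] [IsFractionRing B N] [Algebra A B] [Algebra A N]
    [IsScalarTower A B N] {p : A[X]} (hp : p.Monic) (hsplit : (p.map (algebraMap A N)).Splits) :
    (p.map (algebraMap A B)).Splits := by
  refine Splits.of_splits_map_of_injective (IsFractionRing.injective B N) ?_ fun a ha ↦ ?_
  · rwa [Polynomial.map_map, ← IsScalarTower.algebraMap_eq]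
  · exact IsIntegrallyClosed.isIntegral_iff.mp
      ⟨_, hp.map _, by simpa [eval_map] using (mem_roots'.mp ha).2⟩

theorem card_gal_prod_eq_prod_natDegree_factorial {L ι : Type*} [Field L] [NumberField L]
    [Fintype ι] {p : ι → (𝓞 L)[X]} (hp : ∀ i, (p i).Monic)
    (hirr : ∀ i, HasIrreducibleReduction (p i))
    (hlin : ∀ i, HasLinearMulIrreducibleReduction (p i))
    (hdouble : ∀ i, HasSimpleDoubleRootReduction p i) :
    Nat.card ((∏ i, p i).map (algebraMap (𝓞 L) L)).Gal = ∏ i, (p i).natDegree.factorial := by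
  set F := (∏ i, p i).map (algebraMap (𝓞 L) L)
  have hF : F.Monic := (monic_prod_of_monic _ _ fun i _ ↦ hp i).map _
  let N := F.SplittingField
  have : NumberField N := NumberField.of_module_finite L N
  have : IsGalois L N := { to_normal := Normal.of_isSplittingField F }
  have hsplit (i : ι) : ((p i).map (algebraMap (𝓞 L) N)).Splits := by
    refine (SplittingField.splits F).of_dvd (hF.map _).ne_zero ?_
    rw [Polynomial.map_map, ← IsScalarTower.algebraMap_eq]
    exact Polynomial.map_dvd _ (Finset.dvd_prod_of_mem _ (Finset.mem_univ i))
  refine card_eq_prod_natDegree_factorial (A := 𝓞 L) (B := 𝓞 N) (G := Gal(N/L)) hp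
    (fun i ↦ splits_map_of_isIntegrallyClosed (hp i) (hsplit i)) (fun σ hσ ↦ ?_) hirr hlin hdouble
  have hσ_id : (σ : N →ₐ[L] N) = AlgHom.id L N := by
    refine AlgHom.ext_of_adjoin_eq_top (IsSplittingField.adjoin_rootSet N F) fun β hβ ↦ ?_
    have hβF := (mem_rootSet.mp hβ).2
    rw [aeval_map_algebraMap, map_prod, Finset.prod_eq_zero_iff] at hβF
    obtain ⟨i, -, hβi⟩ := hβF
    obtain ⟨x, rfl⟩ := IsIntegrallyClosed.isIntegral_iff.mp
      (IsIntegral.tower_top (A := 𝓞 N) ⟨p i, hp i, hβi⟩)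
    have hx : x ∈ rootSubMulAction (𝓞 N) Gal(N/L) (p i) := by
      refine mem_rootSet'.mpr ⟨((hp i).map _).ne_zero, RingOfIntegers.coe_injective ?_⟩
      rwa [aeval_algebraMap_apply] at hβi
    exact congr_arg (fun y : rootSubMulAction (𝓞 N) Gal(N/L) (p i) ↦ ((y : 𝓞 N) : N)) (hσ i ⟨x, hx⟩)
  exact AlgEquiv.ext fun x ↦ DFunLike.congr_fun hσ_id x

end NumberField

section DegreeOnePrimes

theorem exists_prime_not_dvd_and_dvd_eval {m : ℤ[X]} (hm : 0 < m.natDegree) {n : ℤ} (hn : n ≠ 0) :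
    ∃ p : ℕ, p.Prime ∧ ¬ (p : ℤ) ∣ n ∧ ∃ a : ℤ, (p : ℤ) ∣ m.eval a := by
  have hinf (c : ℤ) {h : ℤ} (hh : h ≠ 0) (b : ℤ) : {k : ℤ | m.eval (b + h * k) = c}.Finite := by
    have hc : m - C c ≠ 0 := fun hmc ↦ by simp [sub_eq_zero.mp hmc] at hm
    refine ((finite_setOfPred_isRoot hc).preimage (f := fun k ↦ b + h * k)
      fun x _ y _ hxy ↦ ?_).subset fun k hk ↦ ?_
    · exact mul_left_cancel₀ hh (add_left_cancel hxy)
    · simpa [sub_eq_zero] using hk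
  -- With `c = m(b) ≠ 0`, the value `m(b + c n k)` is `c (1 + n k r)`, and the second factor is
  -- coprime to `n`.
  obtain ⟨b, hb⟩ := (hinf 0 one_ne_zero 0).infinite_compl.nonempty
  replace hb : m.eval b ≠ 0 := by simpa using hb
  set c := m.eval b
  obtain ⟨k, hk⟩ := ((hinf c (mul_ne_zero hb hn) b).union
    (hinf (-c) (mul_ne_zero hb hn) b)).infinite_compl.nonempty
  obtain ⟨r, hr⟩ : c * n * k ∣ m.eval (b + c * n * k) - c := by
    simpa using m.sub_dvd_eval_sub (b + c * n * k) b
  have heval : m.eval (b + c * n * k) = c * (1 + n * (k * r)) := by linear_combination hr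
  have hunit : (1 + n * (k * r)).natAbs ≠ 1 := by
    intro h
    obtain h | h := Int.natAbs_eq_iff.mp h <;> simp [heval, h] at hk
  obtain ⟨p, hp, hpr⟩ := Nat.exists_prime_and_dvd hunit
  replace hpr : (p : ℤ) ∣ 1 + n * (k * r) := Int.natCast_dvd.mpr hpr
  refine ⟨p, hp, fun hpn ↦ ?_, _, heval ▸ hpr.mul_left c⟩
  exact (Nat.prime_iff_prime_int.mp hp).not_dvd_one
    ((Int.dvd_add_left (hpn.mul_right _)).mp hpr)

theorem exists_adjoin_singleton_coe_eq_top (L : Type*) [Field L] [NumberField L] :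
    ∃ θ : 𝓞 L, Algebra.adjoin ℚ {(θ : L)} = ⊤ := by
  obtain ⟨y, hy⟩ := Field.exists_primitive_element ℚ L
  obtain ⟨n, hn, hint⟩ := IsAlgebraic.exists_integral_multiple (R := ℤ)
    ((IsFractionRing.isAlgebraic_iff ℤ ℚ L).mpr (Algebra.IsAlgebraic.isAlgebraic y))
  refine ⟨⟨n • y, hint⟩, ?_⟩
  rw [eq_top_iff, ← IntermediateField.top_toSubalgebra, ← hy,
    IntermediateField.adjoin_simple_toSubalgebra_of_isAlgebraic
      (Algebra.IsAlgebraic.isAlgebraic y)]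
  refine Algebra.adjoin_le (Set.singleton_subset_iff.mpr ?_)
  have hny : (n : ℚ)⁻¹ • n • y = y := by
    rw [← Int.cast_smul_eq_zsmul ℚ, inv_smul_smul₀ (Int.cast_ne_zero.mpr hn)]
  exact Set.mem_of_eq_of_mem hny.symm
    (Subalgebra.smul_mem _ (Algebra.self_mem_adjoin_singleton ℚ (n • y)) _)

theorem exponent_ne_zero_of_adjoin_eq_top {L : Type*} [Field L] [NumberField L] {θ : 𝓞 L}
    (hθ : Algebra.adjoin ℚ {(θ : L)} = ⊤) : RingOfIntegers.exponent θ ≠ 0 := by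
  classical
  let pb := PowerBasis.ofAdjoinEqTop' (θ.isIntegral_coe.tower_top (A := ℚ)) hθ
  have hgen : pb.gen = θ := PowerBasis.ofAdjoinEqTop'_gen _ _
  obtain ⟨d, hd⟩ := IsIntegrallyClosed.isIntegral_iff.mp <|
    Algebra.discr_isIntegral (R := ℤ) ℚ (b := pb.basis) fun i ↦ by
      rw [pb.basis_eq_pow, hgen]
      exact θ.isIntegral_coe.pow _
  have hcond : algebraMap ℤ (𝓞 L) d ∈ conductor ℤ θ := by
    refine mem_conductor_iff.mpr fun z ↦ ?_
    have hz := Algebra.discr_mul_isIntegral_mem_adjoin ℚ (B := pb)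
      (by rw [hgen]; exact θ.isIntegral_coe) z.isIntegral_coe
    rw [← hd, hgen, Algebra.adjoin_singleton_eq_range_aeval] at hz
    obtain ⟨P, hP⟩ := hz
    rw [Algebra.adjoin_singleton_eq_range_aeval]
    refine ⟨P, RingOfIntegers.coe_injective ?_⟩
    simpa [aeval_algebraMap_apply, Algebra.smul_def] using hP
  intro hexp
  rw [RingOfIntegers.exponent, Ideal.absNorm_eq_zero_iff] at hexp
  have hd_zero : d = 0 := by
    rwa [← Ideal.mem_comap, ← Ideal.under_def, hexp, Ideal.mem_bot] at hcond
  exact Algebra.discr_not_zero_of_basis ℚ pb.basis (by rw [← hd, hd_zero, map_zero])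

theorem exists_zmod_ringEquiv_quotient (L : Type*) [Field L] [NumberField L] {n : ℤ} (hn : n ≠ 0) :
    ∃ p : ℕ, p.Prime ∧ ¬ (p : ℤ) ∣ n ∧ ∃ Q : Ideal (𝓞 L), Nonempty (ZMod p ≃+* 𝓞 L ⧸ Q) := by
  obtain ⟨θ, hθ_top⟩ := exists_adjoin_singleton_coe_eq_top L
  have hθ := exponent_ne_zero_of_adjoin_eq_top hθ_top
  have hmonic : (minpoly ℤ θ).Monic := minpoly.monic θ.isIntegral
  obtain ⟨p, hp, hpn, a, ha⟩ := exists_prime_not_dvd_and_dvd_eval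
    (minpoly.natDegree_pos θ.isIntegral) (mul_ne_zero (Int.natCast_ne_zero.mpr hθ) hn)
  have : Fact p.Prime := ⟨hp⟩
  have hp_exp : ¬ p ∣ RingOfIntegers.exponent θ :=
    fun h ↦ hpn ((Int.natCast_dvd_natCast.mpr h).mul_right n)
  have hfactor : (X - C a).map (Int.castRingHom (ZMod p)) ∈ RingOfIntegers.monicFactorsMod θ p := by
    rw [Multiset.mem_toFinset, Polynomial.mem_normalizedFactors_iff (hmonic.map _).ne_zero,
      Polynomial.map_sub, map_X, map_C]
    refine ⟨irreducible_X_sub_C _, monic_X_sub_C _, dvd_iff_isRoot.mpr ?_⟩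
    rw [IsRoot, eval_map, eval₂_at_apply]
    exact (ZMod.intCast_zmod_eq_zero_iff_dvd _ p).mpr ha
  have hquot : ZMod p ≃+* (ZMod p)[X] ⧸ Ideal.span {(X - C a).map (Int.castRingHom (ZMod p))} :=
    (quotientSpanXSubCAlgEquiv (a : ZMod p)).symm.toRingEquiv.trans
      (Ideal.quotEquivOfEq (by simp))
  exact ⟨p, hp, fun h ↦ hpn (h.mul_left _), _,
    ⟨hquot.trans (RingOfIntegers.ZModXQuotSpanEquivQuotSpanPair hp_exp hfactor)⟩⟩

theorem intCast_notMem_sq_of_not_dvd_discr {L : Type*} [Field L] [NumberField L] {p : ℤ}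
    (hp : Prime p) (hdiscr : ¬ p ∣ NumberField.discr L) (Q : Ideal (𝓞 L)) [Q.IsPrime] :
    (p : 𝓞 L) ∉ Q ^ 2 := by
  intro hpQ_sq
  have hpQ : (p : 𝓞 L) ∈ Q := Ideal.pow_le_self two_ne_zero hpQ_sq
  have : Q.LiesOver (Ideal.span {p}) :=
    (Ideal.liesOver_span_iff (Ideal.IsPrime.ne_top inferInstance) hp).mpr hpQ
  have : (Ideal.span {p}).IsMaximal :=
    PrincipalIdealRing.isMaximal_of_irreducible hp.irreducible
  have : Algebra.IsUnramifiedAt ℤ Q :=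
    (NumberField.not_dvd_discr_iff_forall_mem L (𝓞 L) hp).mp hdiscr Q inferInstance hpQ
  have hle (n : ℕ) (h : (p : 𝓞 L) ∈ Q ^ n) :
      (Ideal.span {p}).map (algebraMap ℤ (𝓞 L)) ≤ Q ^ n := by
    simpa [Ideal.map_span, Ideal.span_singleton_le_iff_mem] using h
  refine (Ideal.ramificationIdx'_ne_one_iff ?_).mpr (hle 2 hpQ_sq) ?_
  · simpa using hle 1 (by simpa using hpQ)
  · rw [Ideal.ramificationIdx'_eq_ramificationIdx _ Q (by simpa using hp.ne_zero),
      Ideal.ramificationIdx_eq_one Q ℤ]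

end DegreeOnePrimes

theorem monic_add_C {R : Type*} [Semiring R] {p : R[X]} (hp : p.Monic) (hdeg : 0 < p.natDegree)
    (a : R) : (p + C a).Monic :=
  hp.add_of_left (degree_C_le.trans_lt (natDegree_pos_iff_degree_pos.mp hdeg))

theorem monic_sub_C {R : Type*} [Ring R] {p : R[X]} (hp : p.Monic) (hdeg : 0 < p.natDegree)
    (a : R) : (p - C a).Monic :=
  hp.sub_of_left (degree_C_le.trans_lt (natDegree_pos_iff_degree_pos.mp hdeg))

section TangentTrinomial

variable {R : Type*} [CommRing R]

/-- The trinomial `X ^ (r + 1) - (r + 1) * t ^ r * X + r * t ^ (r + 1)`, obtained from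
`X ^ (r + 1)` by subtracting its tangent line at `t`; it serves as a polynomial with a double root
at `t` whose critical points are known: over a field in which `r + 1` is invertible, they are the
multiples of `t` by `r`-th roots of unity. -/
noncomputable def tangentTrinomial (r : ℕ) (t : R) : R[X] :=
  X ^ (r + 1) - (C ((r + 1) * t ^ r) * X - C (r * t ^ (r + 1)))

theorem natDegree_tangent_le (r : ℕ) (t : R) :
    (C ((r + 1) * t ^ r) * X - C (r * t ^ (r + 1))).natDegree ≤ 1 := by
  rw [natDegree_sub_C]
  exact natDegree_C_mul_le _ _ |>.trans natDegree_X_le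

theorem tangentTrinomial_monic [Nontrivial R] {r : ℕ} (hr : r ≠ 0) (t : R) :
    (tangentTrinomial r t).Monic :=
  (monic_X_pow _).sub_of_left <| degree_lt_degree <| by
    rw [natDegree_X_pow]
    exact (natDegree_tangent_le r t).trans_lt (by lia)

theorem natDegree_tangentTrinomial [Nontrivial R] {r : ℕ} (hr : r ≠ 0) (t : R) :
    (tangentTrinomial r t).natDegree = r + 1 := by
  rw [tangentTrinomial, natDegree_sub_eq_left_of_natDegree_lt, natDegree_X_pow]
  rw [natDegree_X_pow]
  exact (natDegree_tangent_le r t).trans_lt (by lia)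

theorem tangentTrinomial_eq (r : ℕ) (t : R) :
    tangentTrinomial r t = X * (X ^ r - C (t ^ r)) - C (r * t ^ r) * (X - C t) := by
  simp only [tangentTrinomial, map_mul, map_add, map_pow, map_natCast, map_one]
  ring

theorem derivative_tangentTrinomial (r : ℕ) (t : R) :
    derivative (tangentTrinomial r t) = C (r + 1 : R) * (X ^ r - C (t ^ r)) := by
  rw [tangentTrinomial, derivative_sub, derivative_sub, derivative_X_pow, derivative_C_mul_X,
    derivative_C, Nat.cast_succ, add_tsub_cancel_right, C_mul]
  ring

end TangentTrinomial

section FiniteField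

theorem exists_monic_irreducible_natDegree_eq (k : Type*) [Field k] [Finite k] {n : ℕ}
    (hn : 0 < n) : ∃ h : k[X], h.Monic ∧ h.natDegree = n ∧ Irreducible h := by
  obtain ⟨p, hp⟩ := CharP.exists k
  have : Fact p.Prime := ⟨CharP.char_is_prime k p⟩
  have : NeZero n := ⟨hn.ne'⟩
  obtain ⟨x, hx⟩ := Field.exists_primitive_element k (FiniteField.Extension k p n)
  have hx_int : IsIntegral k x := Algebra.IsIntegral.isIntegral x
  refine ⟨minpoly k x, minpoly.monic hx_int, ?_, minpoly.irreducible hx_int⟩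
  rw [← IntermediateField.adjoin.finrank hx_int, hx, IntermediateField.finrank_top',
    FiniteField.finrank_extension]

variable {k : Type*} [Field k]

theorem exists_monic_irreducible_sub_C [Finite k] (a : k) {n : ℕ} (hn : 0 < n) :
    ∃ h : k[X], h.Monic ∧ h.natDegree = n ∧ Irreducible (h - C a) := by
  obtain ⟨h, hh, rfl, hirr⟩ := exists_monic_irreducible_natDegree_eq k hn
  exact ⟨h + C a, monic_add_C hh hn a, natDegree_add_C, by simpa using hirr⟩

theorem exists_monic_irreducible_eval_zero_ne_zero (k : Type*) [Field k] [Finite k] {n : ℕ}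
    (hn : 0 < n) : ∃ h : k[X], h.Monic ∧ h.natDegree = n ∧ Irreducible h ∧ h.eval 0 ≠ 0 := by
  obtain rfl | hn_one := eq_or_ne n 1
  · exact ⟨X - C 1, monic_X_sub_C _, natDegree_X_sub_C _, irreducible_X_sub_C _, by simp⟩
  · obtain ⟨h, hh, rfl, hirr⟩ := exists_monic_irreducible_natDegree_eq k hn
    exact ⟨h, hh, rfl, hirr, fun h0 ↦ hn_one <|
      natDegree_eq_of_degree_eq_some (degree_eq_one_of_irreducible_of_root hirr h0)⟩

theorem exists_monic_linear_mul_irreducible_sub_C [Finite k] (a : k) {n : ℕ} (hn : 2 ≤ n) :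
    ∃ h : k[X], h.Monic ∧ h.natDegree = n ∧ (h - C a).Separable ∧
      ∃ (t : k) (v : k[X]), Irreducible v ∧ h - C a = (X - C t) * v := by
  obtain ⟨v, hv, hv_deg, hirr, hv0⟩ :=
    exists_monic_irreducible_eval_zero_ne_zero k (n := n - 1) (by lia)
  have hdeg : (X * v).natDegree = n := by rw [natDegree_X_mul hv.ne_zero]; lia
  refine ⟨X * v + C a, monic_add_C (monic_X.mul hv) (by lia) a, by rw [natDegree_add_C, hdeg],
    ?_, 0, v, hirr, by simp⟩
  rw [add_sub_cancel_right]
  refine separable_X.mul (PerfectField.separable_of_irreducible hirr) ?_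
  rwa [irreducible_X.coprime_iff_not_dvd, X_dvd_iff, coeff_zero_eq_eval_zero]

theorem separable_tangentTrinomial_sub_C {r : ℕ} (hr : (r : k) ≠ 0) (hr_succ : (r + 1 : k) ≠ 0)
    {t : k} (ht : t ≠ 0) {c : k} (hc : (r * t ^ (r + 1) - c) ^ r ≠ (r * t ^ (r + 1)) ^ r) :
    (tangentTrinomial r t - C c).Separable := by
  have hrt : (r * t ^ r : k) ≠ 0 := mul_ne_zero hr (pow_ne_zero r ht)
  -- Modulo the derivative, i.e. modulo `X ^ r - t ^ r`, the polynomial is linear with root `z`.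
  set z := (r * t ^ (r + 1) - c) / (r * t ^ r) with hz
  have hz_eval : ((X : k[X]) ^ r - C (t ^ r)).eval z ≠ 0 := by
    rw [eval_sub, eval_pow, eval_X, eval_C, sub_ne_zero, hz, div_pow, Ne,
      div_eq_iff (pow_ne_zero r hrt), ← mul_pow]
    convert hc using 3
    ring
  have hcoprime : IsCoprime (X - C z) (X ^ r - C (t ^ r)) :=
    (irreducible_X_sub_C z).coprime_iff_not_dvd.mpr (mt dvd_iff_isRoot.mp hz_eval)
  have hcongr : tangentTrinomial r t - C c =
      C (-(r * t ^ r)) * (X - C z) + X * (X ^ r - C (t ^ r)) := by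
    have hmul : C c = C (r * t ^ r) * (C t - C z) := by
      rw [← C_sub, ← C_mul, mul_sub, hz, mul_div_cancel₀ _ hrt]
      ring_nf
    rw [tangentTrinomial_eq, hmul, C_neg]
    ring
  rw [separable_def, derivative_sub, derivative_C, sub_zero, derivative_tangentTrinomial,
    isCoprime_mul_unit_left_right (isUnit_C.mpr hr_succ.isUnit), hcongr,
    IsCoprime.add_mul_right_left_iff,
    isCoprime_mul_unit_left_left (isUnit_C.mpr (neg_ne_zero.mpr hrt).isUnit)]
  exact hcoprime

theorem exists_separable_isRoot_tangentTrinomial {r : ℕ} (hr : (r : k) ≠ 0)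
    (hr_succ : (r + 1 : k) ≠ 0) {t : k} (ht : t ≠ 0) :
    ∃ v : k[X], tangentTrinomial r t = (X - C t) * v ∧ v.Separable ∧ v.IsRoot t := by
  have hrt : IsUnit (C (r * t ^ r)) := isUnit_C.mpr (mul_ne_zero hr (pow_ne_zero r ht)).isUnit
  obtain ⟨e, he⟩ := sub_dvd_pow_sub_pow X (C t) r
  rw [← C_pow] at he
  set v := X * e - C (r * t ^ r) with hv
  have hfactor : tangentTrinomial r t = (X - C t) * v := by
    rw [tangentTrinomial_eq, he, hv]
    ring
  have hderiv : C (r + 1 : k) * ((X - C t) * e) = v + (X - C t) * derivative v := by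
    rw [← he, ← derivative_tangentTrinomial, hfactor, derivative_mul, derivative_X_sub_C, one_mul]
  have hroot : v.IsRoot t := by simpa using (congr_arg (eval t) hderiv).symm
  obtain ⟨u, hu⟩ := dvd_iff_isRoot.mpr hroot
  have hu_coprime : IsCoprime u (C (r + 1 : k) * e) := by
    have hv_coprime : IsCoprime (-C (r * t ^ r) + X * e) e :=
      IsCoprime.add_mul_right_left_iff.mpr (isCoprime_one_left.of_isCoprime_of_dvd_left hrt.neg.dvd)
    refine (isCoprime_mul_unit_left_right (isUnit_C.mpr hr_succ.isUnit) _ _).mpr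
      (hv_coprime.of_isCoprime_of_dvd_left ?_)
    exact ⟨X - C t, by rw [neg_add_eq_sub, ← hv, hu, mul_comm]⟩
  have hu_deriv : C (r + 1 : k) * e = (X - C t) * derivative u + 2 * u := by
    apply mul_left_cancel₀ (X_sub_C_ne_zero t)
    rw [mul_left_comm, hderiv, hu, derivative_mul, derivative_X_sub_C]
    ring
  rw [hu_deriv, IsCoprime.add_mul_right_right_iff, IsCoprime.mul_right_iff] at hu_coprime
  exact ⟨v, hfactor, hu ▸ (separable_X_sub_C.mul hu_coprime.2 hu_coprime.1.symm), hroot⟩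

open Cardinal in
theorem exists_ne_zero_forall_tangent_pow_ne {r : ℕ} (hr : (r : k) ≠ 0) {T : Finset k}
    (hT : 0 ∉ T) (hcard : ((1 + T.card * ((r + 1) * r) : ℕ) : Cardinal) < #k) :
    ∃ t ≠ 0, ∀ c ∈ T, (r * t ^ (r + 1) - c) ^ r ≠ (r * t ^ (r + 1)) ^ r := by
  have hr_ne : r ≠ 0 := fun h ↦ hr (by simp [h])
  let F (c : k) : k[X] := (C (r : k) * X ^ (r + 1) - C c) ^ r - (C (r : k) * X ^ (r + 1)) ^ r
  have hF_ne : ∀ c ∈ T, F c ≠ 0 := by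
    intro c hc hFc
    have hc0 : c = 0 := by simpa [F, hr_ne] using congr_arg (eval 0) hFc
    exact hT (hc0 ▸ hc)
  have hF_deg (c : k) : (F c).natDegree ≤ (r + 1) * r := by
    have hX := natDegree_C_mul_X_pow_le (r : k) (r + 1)
    rw [mul_comm]
    exact natDegree_sub_le_of_le
      (natDegree_pow_le_of_le r (natDegree_sub_C.trans_le hX))
      (natDegree_pow_le_of_le r hX) |>.trans (max_self _).le
  have hdeg : (X * ∏ c ∈ T, F c).natDegree ≤ 1 + T.card * ((r + 1) * r) :=
    natDegree_mul_le_of_le natDegree_X_le <|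
      (natDegree_prod_le _ _).trans (Finset.sum_le_card_nsmul _ _ _ fun c _ ↦ hF_deg c)
  obtain ⟨t, ht⟩ := exists_eval_ne_zero_of_natDegree_lt_card (X * ∏ c ∈ T, F c)
    (mul_ne_zero X_ne_zero (Finset.prod_ne_zero_iff.mpr hF_ne))
    ((Nat.cast_le.mpr hdeg).trans_lt hcard)
  rw [eval_mul, eval_X, eval_prod, mul_ne_zero_iff, Finset.prod_ne_zero_iff] at ht
  exact ⟨t, ht.1, fun c hc ↦ by simpa [F, sub_eq_zero] using ht.2 c hc⟩

open Cardinal in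
theorem exists_monic_double_root_sub_C {n : ℕ} (hn : (n : k) ≠ 0) (hn_pred : ((n - 1 : ℕ) : k) ≠ 0)
    {a : k} {T : Finset k} (ha : a ∉ T)
    (hcard : ((1 + T.card * (n * (n - 1)) : ℕ) : Cardinal) < #k) :
    ∃ h : k[X], h.Monic ∧ h.natDegree = n ∧
      (∃ (t : k) (v : k[X]), h - C a = (X - C t) * v ∧ v.Separable ∧ v.IsRoot t) ∧
      ∀ b ∈ T, (h - C b).Separable := by
  classical
  obtain ⟨r, rfl⟩ : ∃ r, n = r + 1 := Nat.exists_eq_succ_of_ne_zero fun h ↦ hn (by simp [h])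
  rw [add_tsub_cancel_right] at hn_pred hcard
  rw [Nat.cast_succ] at hn
  have hr : r ≠ 0 := fun h ↦ hn_pred (by simp [h])
  obtain ⟨t, ht, hT⟩ := exists_ne_zero_forall_tangent_pow_ne (T := T.image (· - a)) hn_pred
    (by simpa [sub_eq_zero] using ha)
    ((Nat.cast_le.mpr <| add_le_add_right
      (Nat.mul_le_mul_right _ Finset.card_image_le) 1).trans_lt hcard)
  have hdeg := natDegree_tangentTrinomial hr t
  refine ⟨tangentTrinomial r t + C a, monic_add_C (tangentTrinomial_monic hr t) (by lia) a,
    natDegree_add_C.trans hdeg, ⟨t, ?_⟩, fun b hb ↦ ?_⟩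
  · rw [add_sub_cancel_right]
    exact exists_separable_isRoot_tangentTrinomial hn_pred hn ht
  · rw [← sub_sub_eq_add_sub, ← C_sub]
    exact separable_tangentTrinomial_sub_C hn_pred hn ht (hT _ (Finset.mem_image_of_mem _ hb))

end FiniteField

section Congruence

theorem exists_monic_dvd_sub_of_isCoprime {R : Type*} [CommRing R] [Nontrivial R] {m m' : R}
    (hm : IsCoprime m m') {G G' : R[X]} (hG : G.Monic) (hG' : G'.Monic)
    (hdeg : G.natDegree = G'.natDegree) :
    ∃ H : R[X], H.Monic ∧ H.natDegree = G'.natDegree ∧ C m ∣ H - G ∧ C m' ∣ H - G' := by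
  obtain ⟨x, y, hxy⟩ := hm
  have hlt : (C (y * m') * (G - G')).degree < G'.degree := by
    rw [← smul_eq_C_mul]
    exact (degree_smul_le _ _).trans_lt <| degree_sub_lt_right
      (by rw [degree_eq_natDegree hG.ne_zero, hdeg, degree_eq_natDegree hG'.ne_zero]) hG'.ne_zero
      (hG.trans hG'.symm)
  have hxy_C : (C x * C m + C y * C m' : R[X]) = 1 := by
    rw [← C_mul, ← C_mul, ← C_add, hxy, C_1]
  refine ⟨G' + C (y * m') * (G - G'), hG'.add_of_left hlt,
    natDegree_add_eq_left_of_degree_lt hlt, ⟨-C x * (G - G'), ?_⟩, ⟨C y * (G - G'), ?_⟩⟩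
  · rw [C_mul]
    linear_combination (G - G') * hxy_C
  · rw [C_mul]
    ring

/-- A property of integer polynomials which holds for all monic polynomials of degree `n` in a
residue class modulo `m`, where the modulus `m` can be chosen coprime to any given integer. Such
properties can be imposed simultaneously by the Chinese remainder theorem. -/
def IsForcedByCongruence (n : ℕ) (P : ℤ[X] → Prop) : Prop :=
  ∀ N : ℤ, N ≠ 0 → ∃ m : ℤ, m ≠ 0 ∧ IsCoprime m N ∧ ∃ G : ℤ[X], G.Monic ∧ G.natDegree = n ∧
    ∀ g : ℤ[X], g.Monic → g.natDegree = n → C m ∣ g - G → P g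

namespace IsForcedByCongruence

variable {n : ℕ}

theorem and {P P' : ℤ[X] → Prop} (h : IsForcedByCongruence n P) (h' : IsForcedByCongruence n P') :
    IsForcedByCongruence n fun g ↦ P g ∧ P' g := by
  intro N hN
  obtain ⟨m, hm, hmN, G, hG, hG_deg, hP⟩ := h N hN
  obtain ⟨m', hm', hcoprime, G', hG', hG'_deg, hP'⟩ := h' (N * m) (mul_ne_zero hN hm)
  rw [IsCoprime.mul_right_iff] at hcoprime
  obtain ⟨H, hH, hH_deg, hHG, hHG'⟩ :=
    exists_monic_dvd_sub_of_isCoprime hcoprime.2.symm hG hG' (hG_deg.trans hG'_deg.symm)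
  refine ⟨m * m', mul_ne_zero hm hm', hmN.mul_left hcoprime.1, H, hH, hH_deg.trans hG'_deg,
    fun g hg hg_deg hgH ↦ ⟨hP g hg hg_deg ?_, hP' g hg hg_deg ?_⟩⟩
  · rw [← sub_add_sub_cancel g H G]
    exact dvd_add ((C_mul (a := m) ▸ dvd_mul_right _ _).trans hgH) hHG
  · rw [← sub_add_sub_cancel g H G']
    exact dvd_add ((C_mul (a := m) ▸ dvd_mul_left _ _).trans hgH) hHG'

theorem forall_of_finite {ι : Type*} [Finite ι] {P : ι → ℤ[X] → Prop}
    (h : ∀ i, IsForcedByCongruence n (P i)) : IsForcedByCongruence n fun g ↦ ∀ i, P i g := by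
  classical
  have := Fintype.ofFinite ι
  suffices hs : ∀ s : Finset ι, IsForcedByCongruence n fun g ↦ ∀ i ∈ s, P i g by
    simpa using hs Finset.univ
  intro s
  induction s using Finset.induction_on with
  | empty =>
    exact fun N _ ↦ ⟨1, one_ne_zero, isCoprime_one_left, X ^ n, monic_X_pow n, natDegree_X_pow n,
      by simp⟩
  | insert i s _ ih => simpa [Finset.forall_mem_insert] using (h i).and ih

theorem infinite {P : ℤ[X] → Prop} (h : IsForcedByCongruence n P) (hn : 0 < n) :
    {g : ℤ[X] | g.Monic ∧ g.natDegree = n ∧ P g}.Infinite := by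
  obtain ⟨m, hm, -, G, hG, rfl, hP⟩ := h 1 one_ne_zero
  have hinj : Function.Injective fun c : ℤ ↦ G + C (m * c) := fun c d hcd ↦
    mul_left_cancel₀ hm (C_injective (add_left_cancel hcd))
  refine (Set.infinite_range_of_injective hinj).mono ?_
  rintro _ ⟨c, rfl⟩
  have hmonic := monic_add_C hG hn (m * c)
  exact ⟨hmonic, natDegree_add_C, hP _ hmonic natDegree_add_C (by simp)⟩

end IsForcedByCongruence

section Lift

variable {A : Type*} [CommRing A] {Q : Ideal A} {p : ℕ}

theorem isMaximal_of_zmod_ringEquiv [Fact p.Prime] (e : ZMod p ≃+* A ⧸ Q) : Q.IsMaximal :=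
  Ideal.Quotient.maximal_of_isField Q (e.symm.toMulEquiv.isField (Field.toIsField _))

theorem intCast_mem_iff_of_zmod_ringEquiv (e : ZMod p ≃+* A ⧸ Q) (c : ℤ) :
    (c : A) ∈ Q ↔ (p : ℤ) ∣ c := by
  rw [← Ideal.Quotient.eq_zero_iff_mem, map_intCast, ← map_intCast e, map_eq_zero_iff e e.injective,
    ZMod.intCast_zmod_eq_zero_iff_dvd]

theorem exists_monic_forall_map_mk_eq (e : ZMod p ≃+* A ⧸ Q) {h : (A ⧸ Q)[X]} (hh : h.Monic) :
    ∃ G : ℤ[X], G.Monic ∧ G.natDegree = h.natDegree ∧ ∀ g : ℤ[X], C (p : ℤ) ∣ g - G →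
      (g.map (algebraMap ℤ A)).map (Ideal.Quotient.mk Q) = h := by
  let φ := (Ideal.Quotient.mk Q).comp (algebraMap ℤ A)
  have hφ : Function.Surjective φ := by
    rw [RingHom.ext_int φ ((e : ZMod p →+* A ⧸ Q).comp (Int.castRingHom (ZMod p)))]
    exact e.surjective.comp ZMod.intCast_surjective
  obtain ⟨G, rfl, hG_deg, hG⟩ :=
    lifts_and_natDegree_eq_and_monic ((mem_lifts h).mpr (map_surjective φ hφ h)) hh
  refine ⟨G, hG, hG_deg, fun g ⟨w, hw⟩ ↦ ?_⟩
  have hp : φ p = 0 := Ideal.Quotient.eq_zero_iff_mem.mpr <| by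
    simpa using (intCast_mem_iff_of_zmod_ringEquiv e p).mpr dvd_rfl
  rw [Polynomial.map_map, eq_add_of_sub_eq hw, Polynomial.map_add, Polynomial.map_mul, map_C, hp,
    C_0, zero_mul, zero_add]

end Lift

end Congruence

section Forcing

open Ideal.Quotient

variable {L : Type*} [Field L] [NumberField L]

theorem isForcedByCongruence_hasIrreducibleReduction {n : ℕ} (hn : 0 < n) (α : 𝓞 L) :
    IsForcedByCongruence n
      fun g ↦ HasIrreducibleReduction (g.map (algebraMap ℤ (𝓞 L)) - C α) := by
  intro N hN
  obtain ⟨p, hp, hpN, Q, ⟨e⟩⟩ := exists_zmod_ringEquiv_quotient L hN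
  have : Fact p.Prime := ⟨hp⟩
  have hQ := isMaximal_of_zmod_ringEquiv e
  let _ : Field (𝓞 L ⧸ Q) := Ideal.Quotient.field Q
  have : Finite (𝓞 L ⧸ Q) := Finite.of_equiv _ e.toEquiv
  obtain ⟨h, hh, rfl, hirr⟩ := exists_monic_irreducible_sub_C (mk Q α) hn
  obtain ⟨G, hG, hG_deg, hmap⟩ := exists_monic_forall_map_mk_eq e hh
  refine ⟨p, Int.natCast_ne_zero.mpr hp.ne_zero,
    (Nat.prime_iff_prime_int.mp hp).coprime_iff_not_dvd.mpr hpN, G, hG, hG_deg,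
    fun g _ _ hg ↦ ⟨Q, hQ, ?_⟩⟩
  rw [Polynomial.map_sub, map_C, hmap g hg]
  exact ⟨hirr, PerfectField.separable_of_irreducible hirr⟩

theorem isForcedByCongruence_hasLinearMulIrreducibleReduction {n : ℕ} (hn : 2 ≤ n) (α : 𝓞 L) :
    IsForcedByCongruence n
      fun g ↦ HasLinearMulIrreducibleReduction (g.map (algebraMap ℤ (𝓞 L)) - C α) := by
  intro N hN
  obtain ⟨p, hp, hpN, Q, ⟨e⟩⟩ := exists_zmod_ringEquiv_quotient L hN
  have : Fact p.Prime := ⟨hp⟩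
  have hQ := isMaximal_of_zmod_ringEquiv e
  let _ : Field (𝓞 L ⧸ Q) := Ideal.Quotient.field Q
  have : Finite (𝓞 L ⧸ Q) := Finite.of_equiv _ e.toEquiv
  obtain ⟨h, hh, rfl, hsep, hfactor⟩ := exists_monic_linear_mul_irreducible_sub_C (mk Q α) hn
  obtain ⟨G, hG, hG_deg, hmap⟩ := exists_monic_forall_map_mk_eq e hh
  refine ⟨p, Int.natCast_ne_zero.mpr hp.ne_zero,
    (Nat.prime_iff_prime_int.mp hp).coprime_iff_not_dvd.mpr hpN, G, hG, hG_deg,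
    fun g _ _ hg ↦ ⟨Q, hQ, ?_⟩⟩
  rw [Polynomial.map_sub, map_C, hmap g hg]
  exact ⟨hsep, hfactor⟩

theorem exists_zmod_ringEquiv_quotient_of_lt {N : ℤ} (hN : N ≠ 0) (b : ℕ) {s : Finset (𝓞 L)}
    (hs : 0 ∉ s) :
    ∃ p : ℕ, p.Prime ∧ b < p ∧ ¬ (p : ℤ) ∣ N ∧
      ∃ Q : Ideal (𝓞 L), Nonempty (ZMod p ≃+* 𝓞 L ⧸ Q) ∧ ∀ x ∈ s, x ∉ Q := by
  let a : ℕ := ∏ x ∈ s, Ideal.absNorm (Ideal.span {x})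
  have ha : a ≠ 0 := Finset.prod_ne_zero_iff.mpr fun x hx ↦ by
    rw [Ne, Ideal.absNorm_eq_zero_iff, Ideal.span_singleton_eq_bot]
    exact ne_of_mem_of_not_mem hx hs
  obtain ⟨p, hp, hpn, Q, ⟨e⟩⟩ := exists_zmod_ringEquiv_quotient L (n := N * (a * b.factorial : ℕ))
    (mul_ne_zero hN (Int.natCast_ne_zero.mpr (mul_ne_zero ha b.factorial_ne_zero)))
  have hp_ab : ¬ p ∣ a * b.factorial :=
    fun h ↦ hpn ((Int.natCast_dvd_natCast.mpr h).mul_left N)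
  refine ⟨p, hp, ?_, fun h ↦ hpn (h.mul_right _), Q, ⟨e⟩, fun x hx hxQ ↦ hp_ab ?_⟩
  · exact not_le.mp fun hpb ↦ hp_ab ((hp.dvd_factorial.mpr hpb).mul_left a)
  · have hnorm : ((Ideal.absNorm (Ideal.span {x}) : ℤ) : 𝓞 L) ∈ Q := by
      rw [Int.cast_natCast]
      exact (Ideal.span_singleton_le_iff_mem Q).mpr hxQ (Ideal.absNorm_mem _)
    exact ((Int.natCast_dvd_natCast.mp ((intCast_mem_iff_of_zmod_ringEquiv e _).mp hnorm)).trans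
      (Finset.dvd_prod_of_mem (fun x ↦ Ideal.absNorm (Ideal.span {x})) hx)).mul_right _

theorem exists_monic_eval_notMem_of_notMem {A : Type*} [CommRing A] {I : Ideal A} {m : ℤ}
    (hm : (m : A) ∉ I) (α t : A) {G₀ : ℤ[X]} (hG₀ : G₀.Monic) (hdeg : 0 < G₀.natDegree) :
    ∃ G : ℤ[X], G.Monic ∧ G.natDegree = G₀.natDegree ∧ C m ∣ G - G₀ ∧
      (G.map (algebraMap ℤ A) - C α).eval t ∉ I := by
  by_cases hmem : (G₀.map (algebraMap ℤ A) - C α).eval t ∈ I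
  · refine ⟨G₀ + C m, monic_add_C hG₀ hdeg m, natDegree_add_C, by simp, fun hmem' ↦ hm ?_⟩
    simpa using I.sub_mem hmem' hmem
  · exact ⟨G₀, hG₀, rfl, by simp, hmem⟩

theorem eval_map_sub_C_mem_iff {A : Type*} [CommRing A] {I : Ideal A} {m : ℤ} (hm : (m : A) ∈ I)
    (α t : A) {g G : ℤ[X]} (hg : C m ∣ g - G) :
    (g.map (algebraMap ℤ A) - C α).eval t ∈ I ↔ (G.map (algebraMap ℤ A) - C α).eval t ∈ I := by
  obtain ⟨w, hw⟩ := hg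
  have hsub : (g.map (algebraMap ℤ A) - C α).eval t =
      (G.map (algebraMap ℤ A) - C α).eval t + m * (w.map (algebraMap ℤ A)).eval t := by
    rw [eq_add_of_sub_eq hw]
    simp only [Polynomial.map_add, Polynomial.map_mul, map_C, eval_sub, eval_add, eval_mul, eval_C]
    rw [eq_intCast]
    ring
  rw [hsub, I.add_mem_iff_left (I.mul_mem_right _ hm)]

open Classical Cardinal in
theorem exists_zmod_ringEquiv_quotient_and_double_root_sub_C {N : ℤ} (hN : N ≠ 0) {n : ℕ}
    (hn : 2 ≤ n) {ι : Type*} [Finite ι] {α : ι → 𝓞 L} (hα : Function.Injective α) (i : ι) :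
    ∃ p : ℕ, p.Prime ∧ ¬ (p : ℤ) ∣ N ∧ ∃ Q : Ideal (𝓞 L), Nonempty (ZMod p ≃+* 𝓞 L ⧸ Q) ∧
      ∃ h : (𝓞 L ⧸ Q)[X], h.Monic ∧ h.natDegree = n ∧
        (∃ (t : 𝓞 L ⧸ Q) (v : (𝓞 L ⧸ Q)[X]), h - C (mk Q (α i)) = (X - C t) * v ∧ v.Separable ∧
          v.IsRoot t) ∧
        ∀ j ≠ i, (h - C (mk Q (α j))).Separable := by
  have := Fintype.ofFinite ι
  let J := Finset.univ.erase i
  obtain ⟨p, hp, hp_lt, hpN, Q, ⟨e⟩, hQα⟩ := exists_zmod_ringEquiv_quotient_of_lt hN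
    (n + (1 + J.card * (n * (n - 1)))) (s := J.image fun j ↦ α i - α j)
    (by simp [J, sub_eq_zero, hα.eq_iff])
  have : Fact p.Prime := ⟨hp⟩
  have := isMaximal_of_zmod_ringEquiv e
  let _ : Field (𝓞 L ⧸ Q) := Ideal.Quotient.field Q
  have hcast {c : ℕ} (hc : 0 < c) (hcp : c < p) : (c : 𝓞 L ⧸ Q) ≠ 0 := by
    rw [← map_natCast e, Ne, map_eq_zero_iff e e.injective, ZMod.natCast_eq_zero_iff]
    exact Nat.not_dvd_of_pos_of_lt hc hcp
  have hmk : mk Q (α i) ∉ J.image fun j ↦ mk Q (α j) := by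
    simp only [Finset.mem_image, not_exists, not_and]
    exact fun j hj hij ↦
      hQα _ (Finset.mem_image_of_mem _ hj) (Ideal.Quotient.eq.mp hij.symm)
  have hcard :
      ((1 + (J.image fun j ↦ mk Q (α j)).card * (n * (n - 1)) : ℕ) : Cardinal) < #(𝓞 L ⧸ Q) := by
    have : Finite (𝓞 L ⧸ Q) := Finite.of_equiv _ e.toEquiv
    rw [← Nat.cast_card, ← Nat.card_congr e.toEquiv, Nat.card_zmod, Nat.cast_lt]
    refine lt_of_le_of_lt ?_ (lt_of_add_lt_of_nonneg_right hp_lt n.zero_le)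
    gcongr
    exact Finset.card_image_le
  obtain ⟨h, hh, hh_deg, hroot, hsep⟩ := exists_monic_double_root_sub_C
    (hcast (by lia) (lt_of_add_lt_of_nonneg_left hp_lt (Nat.zero_le _)))
    (hcast (by lia) ((Nat.sub_le n 1).trans_lt
      (lt_of_add_lt_of_nonneg_left hp_lt (Nat.zero_le _)))) hmk hcard
  exact ⟨p, hp, hpN, Q, ⟨e⟩, h, hh, hh_deg, hroot, fun j hj ↦
    hsep _ (Finset.mem_image_of_mem _ (Finset.mem_erase.mpr ⟨hj, Finset.mem_univ j⟩))⟩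

theorem isForcedByCongruence_hasSimpleDoubleRootReduction {n : ℕ} (hn : 2 ≤ n) {ι : Type*}
    [Finite ι] {α : ι → 𝓞 L} (hα : Function.Injective α) (i : ι) :
    IsForcedByCongruence n fun g ↦
      HasSimpleDoubleRootReduction (fun j ↦ g.map (algebraMap ℤ (𝓞 L)) - C (α j)) i := by
  intro N hN
  obtain ⟨p, hp, hp_dvd, Q, ⟨e⟩, h, hh, rfl, ⟨t, v, hv, hv_sep, hv_root⟩, hsep⟩ :=
    exists_zmod_ringEquiv_quotient_and_double_root_sub_C
      (mul_ne_zero hN (NumberField.discr_ne_zero L)) hn hα i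
  have hp_prime : Prime (p : ℤ) := Nat.prime_iff_prime_int.mp hp
  have : Fact p.Prime := ⟨hp⟩
  have hQ := isMaximal_of_zmod_ringEquiv e
  have hpQ : ((p : ℤ) : 𝓞 L) ∈ Q := (intCast_mem_iff_of_zmod_ringEquiv e p).mpr dvd_rfl
  have hQ_ne : Q ≠ ⊥ := by
    rintro rfl
    exact hp_prime.ne_zero (Int.cast_eq_zero.mp (Ideal.mem_bot.mp hpQ))
  obtain ⟨t, rfl⟩ := mk_surjective t
  obtain ⟨G₀, hG₀, hG₀_deg, hmap⟩ := exists_monic_forall_map_mk_eq e hh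
  obtain ⟨G, hG, hG_deg, hGG₀, hGt⟩ := exists_monic_eval_notMem_of_notMem
    (intCast_notMem_sq_of_not_dvd_discr hp_prime (fun h ↦ hp_dvd (h.mul_left N)) Q) (α i) t hG₀
    (by lia)
  refine ⟨p ^ 2, pow_ne_zero 2 hp_prime.ne_zero,
    (hp_prime.coprime_iff_not_dvd.mpr fun h ↦ hp_dvd (h.mul_right _)).pow_left, G, hG,
    hG_deg.trans hG₀_deg, fun g _ _ hg ↦ ?_⟩
  have hgG₀ : C (p : ℤ) ∣ g - G₀ := by
    rw [← sub_add_sub_cancel g G G₀]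
    exact dvd_add ((_root_.map_dvd C (dvd_pow_self _ two_ne_zero)).trans hg) hGG₀
  have hmap_sub (β : 𝓞 L) : (g.map (algebraMap ℤ (𝓞 L)) - C β).map (mk Q) = h - C (mk Q β) := by
    rw [Polynomial.map_sub, map_C, hmap g hgG₀]
  refine ⟨Q, hQ, hQ_ne, ⟨t, v, (hmap_sub _).trans hv, hv_sep, hv_root, ?_⟩,
    fun j hj ↦ (hmap_sub _).symm ▸ hsep j hj⟩
  rwa [eval_map_sub_C_mem_iff (by simpa using Ideal.pow_mem_pow hpQ 2) (α i) t hg]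

end Forcing

section CompositionOfPolynomials

theorem isSplittingField_comp {K L N : Type*} [Field K] [Field L] [Field N] [Algebra K L]
    [Algebra L N] [Algebra K N] [IsScalarTower K L N] {f g : K[X]} (hf : f ≠ 0)
    (hg : 0 < g.natDegree) [IsSplittingField K L f]
    [IsSplittingField L N ((f.comp g).map (algebraMap K L))] :
    IsSplittingField K N (f.comp g) := by
  have hfg : f.comp g ≠ 0 := by
    intro h
    obtain h | h := comp_eq_zero_iff.mp h
    · exact hf h
    · exact hg.ne' (h.2 ▸ natDegree_C _)
  have hsplit : ((f.comp g).map (algebraMap K N)).Splits := by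
    have := IsSplittingField.splits N ((f.comp g).map (algebraMap K L))
    rwa [Polynomial.map_map, ← IsScalarTower.algebraMap_eq] at this
  refine ⟨hsplit, ?_⟩
  have := IsSplittingField.mul (K := L) N f (f.comp g) hf hfg
  rw [eq_top_iff, ← IsSplittingField.adjoin_rootSet N (f * f.comp g)]
  refine Algebra.adjoin_le fun α hα ↦ ?_
  have hα_root := (mem_rootSet.mp hα).2
  rw [map_mul, mul_eq_zero] at hα_root
  obtain hα_root | hα_root := hα_root
  · -- A root `α` of `f` is `g(β)` for a root `β` of `f.comp g`.
    have hdvd : g.map (algebraMap K N) - C α ∣ (f.comp g).map (algebraMap K N) := by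
      have : X - C α ∣ f.map (algebraMap K N) := by
        rwa [dvd_iff_isRoot, IsRoot, eval_map_algebraMap]
      simpa [Polynomial.map_comp] using map_dvd (compRingHom (g.map (algebraMap K N))) this
    obtain ⟨β, hβ⟩ := (hsplit.of_dvd (map_ne_zero hfg) hdvd).exists_eval_eq_zero <| by
      refine (natDegree_pos_iff_degree_pos.mp ?_).ne'
      rwa [natDegree_sub_C, natDegree_map]
    obtain rfl : aeval β g = α := by
      rwa [eval_sub, eval_C, sub_eq_zero, eval_map_algebraMap] at hβ
    have hβ_root : β ∈ (f.comp g).rootSet N :=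
      mem_rootSet.mpr ⟨hfg, (aeval_comp ..).trans hα_root⟩
    exact Subalgebra.aeval_coe (Algebra.adjoin K ((f.comp g).rootSet N))
      ⟨β, Algebra.subset_adjoin hβ_root⟩ g ▸ Subtype.prop _
  · exact Algebra.subset_adjoin (mem_rootSet.mpr ⟨hfg, hα_root⟩)

theorem card_gal_eq_finrank {K N : Type*} [Field K] [Field N] [CharZero K] [Algebra K N]
    (f : K[X]) [IsSplittingField K N f] : Nat.card f.Gal = Module.finrank K N := by
  have : IsGalois K f.SplittingField := { to_normal := Normal.of_isSplittingField f }
  rw [(IsSplittingField.algEquiv N f).toLinearEquiv.finrank_eq]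
  exact IsGalois.card_aut_eq_finrank K f.SplittingField

theorem card_gal_comp {K : Type*} (L : Type*) [Field K] [CharZero K] [Field L] [Algebra K L]
    {f g : K[X]} [IsSplittingField K L f] (hf : f ≠ 0) (hg : 0 < g.natDegree) :
    Nat.card (f.comp g).Gal =
      Nat.card f.Gal * Nat.card ((f.comp g).map (algebraMap K L)).Gal := by
  let F := (f.comp g).map (algebraMap K L)
  have : CharZero L := charZero_of_injective_algebraMap (algebraMap K L).injective
  have : IsSplittingField K F.SplittingField (f.comp g) := isSplittingField_comp (L := L) hf hg
  rw [card_gal_eq_finrank (N := L) f, card_gal_eq_finrank (N := F.SplittingField) (f.comp g),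
    card_gal_eq_finrank (N := F.SplittingField) F, Module.finrank_mul_finrank]

end CompositionOfPolynomials

theorem exists_finset_map_eq_prod_X_sub_C {A B N : Type*} [CommRing A] [CommRing B] [IsDomain B]
    [IsIntegrallyClosed B] [Field N] [Algebra B N] [IsFractionRing B N] [Algebra A B] [Algebra A N]
    [IsScalarTower A B N] {p : A[X]} (hp : p.Monic) (hsplit : (p.map (algebraMap A N)).Splits)
    (hsep : (p.map (algebraMap A N)).Separable) :
    ∃ S : Finset B, S.card = p.natDegree ∧ p.map (algebraMap A B) = ∏ α ∈ S, (X - C α) := by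
  classical
  have hsplitB := splits_map_of_isIntegrallyClosed (B := B) hp hsplit
  have hnodup : (p.map (algebraMap A B)).roots.Nodup := by
    refine Multiset.Nodup.of_map (algebraMap B N) (Multiset.nodup_of_le
      (map_roots_le_of_injective _ (IsFractionRing.injective B N)) ?_)
    rw [Polynomial.map_map, ← IsScalarTower.algebraMap_eq]
    exact nodup_roots hsep
  refine ⟨⟨_, hnodup⟩, ?_, hsplitB.eq_prod_roots_of_monic (hp.map _)⟩
  rw [Finset.card_mk, ← hsplitB.natDegree_eq_card_roots, hp.natDegree_map]

theorem map_comp_eq_prod_sub_C {A B : Type*} [CommRing A] [CommRing B] [Algebra A B] {f : A[X]}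
    {S : Finset B} (hf : f.map (algebraMap A B) = ∏ α ∈ S, (X - C α)) (g : A[X]) :
    (f.comp g).map (algebraMap A B) = ∏ α : S, (g.map (algebraMap A B) - C α.1) := by
  rw [Polynomial.map_comp, hf, prod_comp,
    Finset.prod_coe_sort S fun α ↦ g.map (algebraMap A B) - C α]
  simp only [sub_comp, X_comp, C_comp]

theorem card_gal_comp_eq_mul_factorial_pow {K L : Type*} [Field K] [NumberField K] [Field L]
    [NumberField L] [Algebra K L] {f g : (𝓞 K)[X]}
    [IsSplittingField K L (f.map (algebraMap (𝓞 K) K))]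
    (hf : f.Monic) (hg : g.Monic) (hg_pos : 0 < g.natDegree) {S : Finset (𝓞 L)}
    (hfS : f.map (algebraMap (𝓞 K) (𝓞 L)) = ∏ α ∈ S, (X - C α))
    (hirr : ∀ α : S, HasIrreducibleReduction (g.map (algebraMap (𝓞 K) (𝓞 L)) - C α.1))
    (hlin : ∀ α : S, HasLinearMulIrreducibleReduction (g.map (algebraMap (𝓞 K) (𝓞 L)) - C α.1))
    (hdouble : ∀ α : S, HasSimpleDoubleRootReduction
      (fun β : S ↦ g.map (algebraMap (𝓞 K) (𝓞 L)) - C β.1) α) :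
    Nat.card ((f.comp g).map (algebraMap (𝓞 K) K)).Gal =
      Nat.card (f.map (algebraMap (𝓞 K) K)).Gal * g.natDegree.factorial ^ S.card := by
  have hprod := card_gal_prod_eq_prod_natDegree_factorial
    (fun α : S ↦ monic_sub_C (hg.map (algebraMap (𝓞 K) (𝓞 L))) (by rwa [hg.natDegree_map]) α.1)
    hirr hlin hdouble
  rw [← map_comp_eq_prod_sub_C hfS] at hprod
  simp only [natDegree_sub_C, hg.natDegree_map, Finset.prod_const, Finset.card_univ,
    Fintype.card_coe] at hprod
  rw [← hprod, Polynomial.map_map, ← IsScalarTower.algebraMap_eq,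
    IsScalarTower.algebraMap_eq (𝓞 K) K L, ← Polynomial.map_map, Polynomial.map_comp]
  exact card_gal_comp L (hf.map _).ne_zero (by rwa [hg.natDegree_map])

theorem stmt15 (K : Type*) [Field K] [NumberField K]
    (f : (𝓞 K)[X]) (D : ℕ) (hD : 1 ≤ D) (hmonic : f.Monic) (hdeg : f.natDegree = D)
    (hsep : (f.map (algebraMap (𝓞 K) K)).Separable)
    (M : ℕ) (hM : Nat.card (f.map (algebraMap (𝓞 K) K)).Gal = M)
    (ℓ : ℕ) (hℓ : 2 ≤ ℓ) :
    {g : (𝓞 K)[X] | g.Monic ∧ g.natDegree = ℓ ∧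
      Nat.card ((f.comp g).map (algebraMap (𝓞 K) K)).Gal = M * ℓ.factorial ^ D}.Infinite := by
  let L := (f.map (algebraMap (𝓞 K) K)).SplittingField
  have : NumberField L := NumberField.of_module_finite K L
  have hmap : (f.map (algebraMap (𝓞 K) K)).map (algebraMap K L) = f.map (algebraMap (𝓞 K) L) := by
    rw [Polynomial.map_map, ← IsScalarTower.algebraMap_eq]
  obtain ⟨S, hS_card, hfS⟩ := exists_finset_map_eq_prod_X_sub_C (B := 𝓞 L) hmonic
    (hmap ▸ SplittingField.splits _) (hmap ▸ hsep.map)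
  have hforced := IsForcedByCongruence.forall_of_finite fun α : S ↦
    (isForcedByCongruence_hasIrreducibleReduction (by lia : 0 < ℓ) α.1).and <|
    (isForcedByCongruence_hasLinearMulIrreducibleReduction hℓ α.1).and <|
    isForcedByCongruence_hasSimpleDoubleRootReduction hℓ Subtype.val_injective α
  refine ((hforced.infinite (by lia)).image
    (map_injective (algebraMap ℤ (𝓞 K)) (algebraMap ℤ (𝓞 K)).injective_int).injOn).mono ?_
  rintro _ ⟨g, ⟨hg, rfl, hgS⟩, rfl⟩
  refine ⟨hg.map _, hg.natDegree_map _, ?_⟩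
  simp only [IsScalarTower.algebraMap_eq ℤ (𝓞 K) (𝓞 L), ← Polynomial.map_map] at hgS
  rw [card_gal_comp_eq_mul_factorial_pow hmonic (hg.map _) (by rw [hg.natDegree_map]; lia) hfS
    (fun α ↦ (hgS α).1) (fun α ↦ (hgS α).2.1) (fun α ↦ (hgS α).2.2), hM, hS_card, hdeg,
    hg.natDegree_map]
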